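/- The function f(r) = (2/π)·𝒦(r)·𝒦'(r) + log r − μ(r') is strictly decreasing on (0,1); moreover f(r) → log 4 as r → 0⁺ and f(r) → 0 as r → 1⁻, so f maps (0,1) onto (0, log 4). -/

import Mathlib

open Set Filter

/-- Complete elliptic integral of the first kind. -/
noncomputable def ellK (r : ℝ) : ℝ :=
  ∫ θ in (0:ℝ)..(Real.pi / 2), (1 - r ^ 2 * Real.sin θ ^ 2) ^ (-(1/2) : ℝ)

/-- The Grötzsch modulus μ(r) = (π/2)·𝒦'(r)/𝒦(r). -/
noncomputable def mu (r : ℝ) : ℝ :=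
  Real.pi / 2 * ellK (Real.sqrt (1 - r ^ 2)) / ellK r

open Real Topology MeasureTheory

/-- the base expression -/
noncomputable def bs (m θ : ℝ) : ℝ := 1 - m * sin θ ^ 2

noncomputable def JJ (w : ℝ → ℝ) (m : ℝ) : ℝ :=
  ∫ θ in (0:ℝ)..(π / 2), w θ * (bs m θ) ^ (-(1/2) : ℝ)

noncomputable def kk (m : ℝ) : ℝ := JJ (fun _ => 1) m
noncomputable def cc (m : ℝ) : ℝ := JJ (fun θ => cos θ ^ 2) m

lemma bs_pos {m : ℝ} (hm : m < 1) (θ : ℝ) : 0 < bs m θ := by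
  unfold bs
  have h1 := sin_sq_le_one θ
  have h2 := sq_nonneg (sin θ)
  rcases le_total m 0 with h | h <;> nlinarith

lemma bs_cont (m : ℝ) : Continuous (bs m) := by unfold bs; fun_prop

lemma bs_rpow_cont {m : ℝ} (hm : m < 1) (p : ℝ) : Continuous (fun θ => (bs m θ) ^ p) :=
  (bs_cont m).rpow_const (fun θ => Or.inl (bs_pos hm θ).ne')

lemma JJ_deriv (w : ℝ → ℝ) (hw : Continuous w) {m : ℝ} (hm : m < 1) :
    HasDerivAt (JJ w)
      (∫ θ in (0:ℝ)..(π / 2), w θ * (sin θ ^ 2 / 2 * (bs m θ) ^ (-(3/2) : ℝ))) m := by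
  have hs : Iio ((1 + m) / 2) ∈ 𝓝 m := Iio_mem_nhds (by linarith)
  have hlt : ∀ x ∈ Iio ((1 + m) / 2), x < 1 := fun x hx => by
    have : x < (1 + m) / 2 := hx
    linarith
  have key := intervalIntegral.hasDerivAt_integral_of_dominated_loc_of_deriv_le
    (μ := volume) (a := 0) (b := π / 2) (x₀ := m)
    (F := fun m θ => w θ * (bs m θ) ^ (-(1/2) : ℝ))
    (F' := fun m θ => w θ * (sin θ ^ 2 / 2 * (bs m θ) ^ (-(3/2) : ℝ)))
    (bound := fun θ => |w θ| * (sin θ ^ 2 / 2 * (bs ((1 + m) / 2) θ) ^ (-(3/2) : ℝ)))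
    hs ?_ ?_ ?_ ?_ ?_ ?_
  · exact key.2
  · filter_upwards [hs] with x hx
    exact (hw.mul (bs_rpow_cont (hlt x hx) _)).aestronglyMeasurable
  · exact (hw.mul (bs_rpow_cont hm _)).intervalIntegrable _ _
  · exact (hw.mul (((continuous_sin.pow 2).div_const 2).mul
      (bs_rpow_cont hm _))).aestronglyMeasurable
  · refine Eventually.of_forall fun θ _ x hx => ?_
    have hx' : x < (1 + m) / 2 := hx
    rw [norm_mul, Real.norm_eq_abs, Real.norm_eq_abs,
      abs_of_nonneg (a := sin θ ^ 2 / 2 * _) (mul_nonneg (by positivity)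
        (rpow_nonneg (bs_pos (hlt x hx) θ).le _))]
    gcongr |w θ| * (_ * ?_)
    apply rpow_le_rpow_of_nonpos (bs_pos (by linarith) θ) _ (by norm_num)
    unfold bs
    nlinarith [sq_nonneg (sin θ)]
  · exact (hw.abs.mul (((continuous_sin.pow 2).div_const 2).mul
      (bs_rpow_cont (by linarith) _))).intervalIntegrable _ _
  · refine Eventually.of_forall fun θ _ x hx => ?_
    have h1 : HasDerivAt (fun x => bs x θ) (-(sin θ ^ 2)) x := by
      unfold bs
      simpa using ((hasDerivAt_id x).mul_const (sin θ ^ 2)).const_sub 1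
    have h2 := (h1.rpow_const (p := -(1/2)) (Or.inl (bs_pos (hlt x hx) θ).ne')).const_mul (w θ)
    refine h2.congr_deriv ?_
    have e : (-(1/2) - 1 : ℝ) = -(3/2) := by norm_num
    rw [e]; ring

lemma rpow_half {x : ℝ} (hx : 0 < x) : x ^ (-(1/2) : ℝ) = x * x ^ (-(3/2) : ℝ) := by
  rw [← rpow_one_add' hx.le (by norm_num)]; norm_num

/-- exact derivative identity -/
lemma exact_int {m : ℝ} (hm : m < 1) :
    ∫ θ in (0:ℝ)..(π / 2), (cos θ ^ 2 - sin θ ^ 2 + m * sin θ ^ 4) * (bs m θ) ^ (-(3/2) : ℝ) = 0 := by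
  rw [intervalIntegral.integral_eq_sub_of_hasDerivAt
    (f := fun θ => sin θ * cos θ * (bs m θ) ^ (-(1/2) : ℝ))]
  · simp
  · intro θ _
    have h1 : HasDerivAt (bs m) (-(m * (2 * sin θ * cos θ))) θ := by
      unfold bs
      simpa using (((hasDerivAt_sin θ).pow 2).const_mul m).const_sub 1
    have h2 := h1.rpow_const (p := -(1/2)) (Or.inl (bs_pos hm θ).ne')
    have h3 := ((hasDerivAt_sin θ).mul (hasDerivAt_cos θ)).mul h2
    refine h3.congr_deriv ?_
    symm
    have e : (-(1/2) - 1 : ℝ) = -(3/2) := by norm_num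
    have hc : cos θ ^ 2 = 1 - sin θ ^ 2 := cos_sq' θ
    rw [e, rpow_half (bs_pos hm θ)]
    generalize (bs m θ) ^ (-(3/2) : ℝ) = P
    unfold bs
    simp only [Pi.mul_apply]
    ring_nf
  · apply Continuous.intervalIntegrable
    exact (by fun_prop : Continuous fun θ : ℝ => cos θ ^ 2 - sin θ ^ 2 + m * sin θ ^ 4).mul
      (bs_rpow_cont hm _)

lemma kk_deriv {m : ℝ} (hm : m < 1) : HasDerivAt kk (cc m / (2 * (1 - m))) m := by
  have h := JJ_deriv (fun _ => 1) continuous_const hm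
  have hne : (1 - m) ≠ 0 := by linarith
  refine (h.congr_deriv ?_)
  rw [eq_div_iff (by positivity)]
  unfold cc JJ
  rw [← intervalIntegral.integral_mul_const, ← sub_eq_zero, ← intervalIntegral.integral_sub]
  · rw [← neg_eq_zero, ← intervalIntegral.integral_neg]
    refine Eq.trans ?_ (exact_int hm)
    congr 1; ext θ
    rw [rpow_half (bs_pos hm θ)]
    have hc : cos θ ^ 2 = 1 - sin θ ^ 2 := cos_sq' θ
    generalize (bs m θ) ^ (-(3/2) : ℝ) = P
    unfold bs
    linear_combination (-(m * sin θ ^ 2 * P)) * hc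
  · exact ((continuous_const.mul (((continuous_sin.pow 2).div_const 2).mul
      (bs_rpow_cont hm _))).mul continuous_const).intervalIntegrable _ _
  · exact ((continuous_cos.pow 2).mul (bs_rpow_cont hm _)).intervalIntegrable _ _

lemma mcc_deriv {m : ℝ} (hm : m < 1) : HasDerivAt (fun m => m * cc m) (kk m / 2) m := by
  have h := JJ_deriv (fun θ => cos θ ^ 2) (by fun_prop) hm
  have h2 := (hasDerivAt_id m).mul h
  refine (h2.congr_deriv ?_)
  simp only [id, one_mul]
  unfold kk JJ
  rw [← intervalIntegral.integral_div, ← intervalIntegral.integral_const_mul,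
    ← intervalIntegral.integral_add, ← sub_eq_zero, ← intervalIntegral.integral_sub]
  · trans (∫ θ in (0:ℝ)..(π / 2), (cos θ ^ 2 - sin θ ^ 2 + m * sin θ ^ 4)
      * (bs m θ) ^ (-(3/2) : ℝ)) * (1/2)
    · rw [← intervalIntegral.integral_mul_const]
      congr 1; ext θ
      rw [rpow_half (bs_pos hm θ)]
      have hc : cos θ ^ 2 = 1 - sin θ ^ 2 := cos_sq' θ
      generalize (bs m θ) ^ (-(3/2) : ℝ) = P
      unfold bs
      linear_combination (P/2-(m * sin θ ^ 2 * P)/2) * hc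
    · rw [exact_int hm]; simp
  · exact ((by fun_prop : Continuous fun θ : ℝ => cos θ ^ 2).mul (bs_rpow_cont hm _) |>.add
      (continuous_const.mul ((by fun_prop : Continuous fun θ : ℝ => cos θ ^ 2).mul
       (((continuous_sin.pow 2).div_const 2).mul
      (bs_rpow_cont hm _))))).intervalIntegrable _ _
  · exact ((continuous_const.mul (bs_rpow_cont hm _)).div_const _).intervalIntegrable _ _
  · exact ((by fun_prop : Continuous fun θ : ℝ => cos θ ^ 2).mul
      (bs_rpow_cont hm _)).intervalIntegrable _ _
  · exact (continuous_const.mul ((by fun_prop : Continuous fun θ : ℝ => cos θ ^ 2).mul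
       (((continuous_sin.pow 2).div_const 2).mul
      (bs_rpow_cont hm _)))).intervalIntegrable _ _

lemma pi2 : (0:ℝ) ≤ π / 2 := by positivity

lemma kk_pos {m : ℝ} (hm : m < 1) : 0 < kk m := by
  unfold kk JJ
  apply intervalIntegral.intervalIntegral_pos_of_pos_on
  · exact (continuous_const.mul (bs_rpow_cont hm _)).intervalIntegrable _ _
  · intro θ _
    rw [one_mul]; exact rpow_pos_of_pos (bs_pos hm θ) _
  · positivity

lemma kk_zero : kk 0 = π / 2 := by simp [kk, JJ, bs]

lemma cos_nn {θ : ℝ} (h : θ ∈ Icc 0 (π / 2)) : 0 ≤ cos θ :=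
  cos_nonneg_of_mem_Icc ⟨by linarith [h.1, pi_pos], h.2⟩

/-- pointwise bound: cos^2 ≤ cos * sqrt -/
lemma rp_eq {x : ℝ} (hx : 0 < x) : x ^ (-(1/2) : ℝ) = (√x)⁻¹ := by
  rw [rpow_neg hx.le, sqrt_eq_rpow]

lemma cc_pt {m θ : ℝ} (hm : m < 1) (h : 0 ≤ cos θ) :
    cos θ * bs m θ ^ (-(1/2) : ℝ) ≤ 1 := by
  have hb := bs_pos hm θ
  rw [rp_eq hb, mul_inv_le_iff₀ (sqrt_pos.2 hb), one_mul]
  apply le_sqrt_of_sq_le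
  unfold bs
  nlinarith [sin_sq_add_cos_sq θ, sq_nonneg (sin θ)]

lemma cc_le {m : ℝ} (hm : m < 1) : cc m ≤ 1 := by
  have : (∫ θ in (0:ℝ)..(π / 2), cos θ) = 1 := by simp
  rw [← this]
  apply intervalIntegral.integral_mono_on pi2
  · exact ((continuous_cos.pow 2).mul (bs_rpow_cont hm _)).intervalIntegrable _ _
  · exact continuous_cos.intervalIntegrable _ _
  · intro θ h
    have h0 := cos_nn h
    have := cc_pt hm h0
    nlinarith

lemma cc_nonneg {m : ℝ} (hm : m < 1) : 0 ≤ cc m := by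
  apply intervalIntegral.integral_nonneg pi2
  intro θ _
  have := (rpow_pos_of_pos (bs_pos hm θ) (-(1/2))).le
  positivity

lemma arct_int {a : ℝ} (ha : 0 < a) :
    ∫ θ in (0:ℝ)..(π / 2), a / (cos θ ^ 2 + a ^ 2 * sin θ ^ 2) = π / 2 := by
  have hp : ∀ b : ℝ, 0 < b → ∀ θ, 0 < cos θ ^ 2 + b * sin θ ^ 2 := by
    intro b hb θ
    rcases le_total b 1 with h | h <;>
    nlinarith [sin_sq_add_cos_sq θ, sq_nonneg (sin θ), sq_nonneg (cos θ)]
  rw [intervalIntegral.integral_eq_sub_of_hasDerivAt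
    (f := fun θ => θ + arctan ((a - 1) * (sin θ * cos θ) / (cos θ ^ 2 + a * sin θ ^ 2)))]
  · simp
  · intro θ _
    have h1 := ((hasDerivAt_sin θ).mul (hasDerivAt_cos θ)).const_mul (a - 1)
    have h2 := ((hasDerivAt_cos θ).pow 2).add (((hasDerivAt_sin θ).pow 2).const_mul a)
    have h3 := (hasDerivAt_id θ).add (h1.div h2 (hp a ha θ).ne').arctan
    refine h3.congr_deriv ?_
    have q1 := hp a ha θ
    have q2 := hp (a ^ 2) (by positivity) θ
    simp only [Pi.mul_apply, Pi.add_apply, Pi.pow_apply, Pi.div_apply]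
    have hs : sin θ ^ 2 = 1 - cos θ ^ 2 := sin_sq θ
    have q3 : 0 < (cos θ ^ 2 + a * sin θ ^ 2) ^ 2 + ((a - 1) * (sin θ * cos θ)) ^ 2 := by positivity
    have q4 : (cos θ ^ 2 + a * sin θ ^ 2) ^ 2 + ((a - 1) * (sin θ * cos θ)) ^ 2
      = cos θ ^ 2 + a ^ 2 * sin θ ^ 2 := by
      linear_combination (cos θ ^ 2 + a ^ 2 * sin θ ^ 2 ) * sin_sq_add_cos_sq θ
    have q5 : 1 + ((a - 1) * (sin θ * cos θ) / (cos θ ^ 2 + a * sin θ ^ 2)) ^ 2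
       = (cos θ ^ 2 + a ^ 2 * sin θ ^ 2) / (cos θ ^ 2 + a * sin θ ^ 2) ^ 2 := by
      rw [← q4]; field_simp
    rw [q5]
    field_simp
    push_cast
    simp only [pow_one, Nat.add_one_sub_one, Nat.reduceSub]
    have q6 : sin θ ^ 4 = (1 - cos θ ^ 2) ^ 2 := by rw [← hs]; ring
    ring_nf
    try simp only [hs, q6]
    try ring
  · apply Continuous.intervalIntegrable
    exact continuous_const.div (by fun_prop) (fun θ => (hp (a ^ 2) (by positivity) θ).ne')

/-- kk (1 - m) ≤ π / (2 m^{1/4}), with m = a^4 -/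
lemma kk_le {a : ℝ} (ha : 0 < a) : a * kk (1 - a ^ 4) ≤ π / 2 := by
  have hm : 1 - a ^ 4 < 1 := by have : 0 < a ^ 4 := by positivity
                                linarith
  rw [← arct_int ha]
  unfold kk JJ
  rw [← intervalIntegral.integral_const_mul]
  have hp : ∀ b : ℝ, 0 < b → ∀ θ, 0 < cos θ ^ 2 + b * sin θ ^ 2 := by
    intro b hb θ
    rcases le_total b 1 with h | h <;>
    nlinarith [sin_sq_add_cos_sq θ, sq_nonneg (sin θ), sq_nonneg (cos θ)]
  apply intervalIntegral.integral_mono_on pi2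
  · exact (continuous_const.mul (continuous_const.mul (bs_rpow_cont hm _))).intervalIntegrable _ _
  · apply Continuous.intervalIntegrable
    exact continuous_const.div (by fun_prop) (fun θ => (hp (a ^ 2) (by positivity) θ).ne')
  · intro θ h
    rw [rp_eq (bs_pos hm θ), one_mul, div_eq_mul_inv]
    have := hp (a ^ 2) (by positivity) θ
    gcongr
    apply le_sqrt_of_sq_le
    unfold bs
    have hs : cos θ ^ 2 = 1 - sin θ ^ 2 := cos_sq' θ
    have h1 : sin θ ^ 2 ≤ 1 := sin_sq_le_one θ
    rw [hs]
    have : 0 ≤ (a ^ 2 - 1) ^ 2 * (sin θ ^ 2 * (1 - sin θ ^ 2)) :=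
      mul_nonneg (by positivity) (mul_nonneg (by positivity) (by linarith))
    nlinarith

lemma cos_pos_ae {P : ℝ → Prop} (h : ∀ θ, 0 < θ → 0 < cos θ → P θ) :
    ∀ᵐ θ ∂(volume : Measure ℝ), θ ∈ uIoc 0 (π / 2) → P θ := by
  have h0 : ∀ᵐ θ ∂(volume : Measure ℝ), θ ≠ π / 2 := by simp [ae_iff]
  filter_upwards [h0] with θ hne hθ
  rw [uIoc_of_le pi2] at hθ
  exact h θ hθ.1 (cos_pos_of_mem_Ioo ⟨by linarith [hθ.1, pi_pos], lt_of_le_of_ne hθ.2 hne⟩)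

lemma bs_one (θ : ℝ) : bs 1 θ = cos θ ^ 2 := by unfold bs; rw [cos_sq']; ring

lemma rp_one {θ : ℝ} (h : 0 < cos θ) : bs 1 θ ^ (-(1/2) : ℝ) = (cos θ)⁻¹ := by
  rw [bs_one, rp_eq (by positivity), sqrt_sq h.le]

lemma rp_tendsto {θ : ℝ} (h : 0 < cos θ) :
    Tendsto (fun m => bs (1 - m) θ ^ (-(1/2) : ℝ)) (𝓝[>] 0) (𝓝 (cos θ)⁻¹) := by
  rw [← rp_one h]
  have : ContinuousAt (fun m => bs (1 - m) θ ^ (-(1/2) : ℝ)) 0 := by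
    apply ContinuousAt.rpow_const
    · unfold bs; fun_prop
    · left; simp only [sub_zero, bs_one]; positivity
  have := this.tendsto
  simp only [sub_zero] at this
  exact this.mono_left nhdsWithin_le_nhds

lemma cc_tendsto : Tendsto (fun m => cc (1 - m)) (𝓝[>] 0) (𝓝 1) := by
  have e : (∫ θ in (0:ℝ)..(π / 2), cos θ) = 1 := by simp
  suffices H : Tendsto (fun m => cc (1 - m)) (𝓝[>] 0) (𝓝 (∫ θ in (0:ℝ)..(π / 2), cos θ)) by
    rwa [e] at H
  apply intervalIntegral.tendsto_integral_filter_of_dominated_convergence (fun _ => 1)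
  · filter_upwards [self_mem_nhdsWithin] with m hm
    have hm : 1 - m < 1 := by have : 0 < m := hm
                              linarith
    exact ((continuous_cos.pow 2).mul (bs_rpow_cont hm _)).aestronglyMeasurable
  · filter_upwards [self_mem_nhdsWithin] with m hm
    have hm : 1 - m < 1 := by have : 0 < m := hm
                              linarith
    apply cos_pos_ae
    intro θ _ hc
    have := (rpow_pos_of_pos (bs_pos hm θ) (-(1/2))).le
    rw [Real.norm_eq_abs, abs_of_nonneg (by positivity)]
    have := cc_pt hm hc.le
    nlinarith [cos_le_one θ]
  · simp
  · apply cos_pos_ae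
    intro θ _ hc
    have := (rp_tendsto hc).const_mul (cos θ ^ 2)
    convert this using 2
    field_simp

lemma rest_tendsto : Tendsto (fun m => JJ (fun θ => 1 - sin θ) (1 - m)) (𝓝[>] 0) (𝓝 (log 2)) := by
  have hp : ∀ θ ∈ uIcc 0 (π / 2), 0 < 1 + sin θ := by
    intro θ h
    rw [uIcc_of_le pi2] at h
    have := sin_nonneg_of_nonneg_of_le_pi h.1 (by linarith [h.2, pi_pos])
    linarith
  have e : (∫ θ in (0:ℝ)..(π / 2), cos θ / (1 + sin θ)) = log 2 := by
    rw [intervalIntegral.integral_eq_sub_of_hasDerivAt (f := fun θ => log (1 + sin θ))]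
    · norm_num
    · intro θ h
      exact ((hasDerivAt_sin θ).const_add 1).log (hp θ h).ne'
    · apply ContinuousOn.intervalIntegrable
      exact continuous_cos.continuousOn.div (by fun_prop) (fun θ h => (hp θ h).ne')
  rw [← e]
  apply intervalIntegral.tendsto_integral_filter_of_dominated_convergence (fun _ => 1)
  · filter_upwards [self_mem_nhdsWithin] with m hm
    have hm : 1 - m < 1 := by have : 0 < m := hm
                              linarith
    exact ((continuous_const.sub continuous_sin).mul (bs_rpow_cont hm _)).aestronglyMeasurable
  · filter_upwards [self_mem_nhdsWithin, Ioo_mem_nhdsGT (zero_lt_one' ℝ)] with m hm hm1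
    have hm : 1 - m < 1 := by have : 0 < m := hm
                              linarith
    filter_upwards [cos_pos_ae (P := fun θ => 0 < cos θ) (fun _ _ h => h)] with θ h1 h2
    have hc := h1 h2
    have hr := (rpow_pos_of_pos (bs_pos hm θ) (-(1/2))).le
    have hs1 := sin_le_one θ
    have hs0 : 0 ≤ sin θ := by
      rw [uIoc_of_le pi2] at h2
      exact sin_nonneg_of_nonneg_of_le_pi h2.1.le (by linarith [h2.2, pi_pos])
    rw [Real.norm_eq_abs, abs_of_nonneg (mul_nonneg (by linarith) hr)]
    have := cc_pt hm hc.le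
    have h3 : 1 - sin θ ≤ cos θ := by nlinarith [sin_sq_add_cos_sq θ, cos_le_one θ]
    nlinarith
  · simp
  · filter_upwards [cos_pos_ae (P := fun θ => 0 < cos θ) (fun _ _ h => h)] with θ h1 h2
    have hc := h1 h2
    have := (rp_tendsto hc).const_mul (1 - sin θ)
    convert this using 2
    have := hp θ (uIoc_subset_uIcc h2)
    field_simp
    nlinarith [sin_sq_add_cos_sq θ]

lemma sin_part {m : ℝ} (h0 : 0 < m) (h1 : m < 1) :
    JJ sin (1 - m) = (log (1 + √(1 - m)) - log m / 2) / √(1 - m) := by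
  have hm : 1 - m < 1 := by linarith
  set b := √(1 - m) with hb
  have hb0 : 0 < b := sqrt_pos.2 (by linarith)
  have hb2 : b ^ 2 = 1 - m := sq_sqrt (by linarith)
  unfold JJ
  have hbs : ∀ θ, bs (1 - m) θ = m + b ^ 2 * cos θ ^ 2 := by
    intro θ; unfold bs; rw [hb2, cos_sq']; ring
  rw [intervalIntegral.integral_eq_sub_of_hasDerivAt
    (f := fun θ => -(log (b * cos θ + √(m + b ^ 2 * cos θ ^ 2)) / b))]
  · simp only [cos_pi_div_two, cos_zero]
    have : m + b ^ 2 * 1 ^ 2 = 1 := by rw [hb2]; ring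
    rw [this]
    simp only [sqrt_one, mul_zero, zero_add, mul_one, ne_eq, OfNat.ofNat_ne_zero, not_false_eq_true,
      zero_pow, add_zero]
    rw [log_sqrt h0.le, add_comm b 1]; ring
  · intro θ h
    rw [uIcc_of_le pi2] at h
    have hc := cos_nn h
    have hq : 0 < m + b ^ 2 * cos θ ^ 2 := by positivity
    have hpos : 0 < b * cos θ + √(m + b ^ 2 * cos θ ^ 2) := by positivity
    have hcm := (hasDerivAt_cos θ).const_mul b
    have hd := ((((hasDerivAt_cos θ).pow 2).const_mul (b ^ 2)).const_add m).sqrt hq.ne'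
    have h3 := (((hcm.add hd).log hpos.ne').div_const b).neg
    refine h3.congr_deriv ?_
    rw [rp_eq (bs_pos hm θ), hbs]
    have hS : 0 < √(m + b ^ 2 * cos θ ^ 2) := sqrt_pos.2 hq
    simp only [Pi.add_apply, Pi.pow_apply]
    generalize √(m + b ^ 2 * cos θ ^ 2) = S at *
    push_cast
    field_simp
    ring
  · exact (continuous_sin.mul (bs_rpow_cont hm _)).intervalIntegrable _ _

lemma kk_log : Tendsto (fun m => kk (1 - m) + log m / 2) (𝓝[>] 0) (𝓝 (log 4)) := by
  have hsq : ContinuousAt (fun m : ℝ => √(1 - m)) 0 := by fun_prop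
  have hl : Tendsto (fun m : ℝ => log (1 + √(1 - m)) / √(1 - m)) (𝓝[>] 0) (𝓝 (log 2)) := by
    have : ContinuousAt (fun m : ℝ => log (1 + √(1 - m)) / √(1 - m)) 0 := by
      apply ContinuousAt.div _ hsq (by simp)
      apply ContinuousAt.log (by fun_prop)
      simp
    have := this.tendsto.mono_left (nhdsWithin_le_nhds (s := Ioi 0))
    norm_num at this
    exact this
  have hm : Tendsto (fun m : ℝ => log m * m ^ (1:ℝ)) (𝓝[>] 0) (𝓝 0) :=
    tendsto_log_mul_rpow_nhdsGT_zero one_pos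
  have hc : Tendsto (fun m : ℝ => 1 / (2 * √(1 - m) * (1 + √(1 - m)))) (𝓝[>] 0) (𝓝 (1/4)) := by
    have : ContinuousAt (fun m : ℝ => 1 / (2 * √(1 - m) * (1 + √(1 - m)))) 0 := by
      apply ContinuousAt.div continuousAt_const (by fun_prop)
      simp
    have := this.tendsto.mono_left (nhdsWithin_le_nhds (s := Ioi 0))
    norm_num at this
    convert this using 2
    · simp
  have := (rest_tendsto.add hl).sub (hm.mul hc)
  have e4 : log 4 = log 2 + log 2 - 0 * (1/4) := by
    rw [show (4:ℝ) = 2 * 2 by norm_num, log_mul (by norm_num) (by norm_num)]; ring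
  rw [e4]
  refine this.congr' ?_
  filter_upwards [Ioo_mem_nhdsGT (zero_lt_one' ℝ)] with m hm
  have hm1 : 1 - m < 1 := by linarith [hm.1]
  have e : kk (1 - m) = JJ (fun θ => 1 - sin θ) (1 - m) + JJ sin (1 - m) := by
    unfold kk JJ
    rw [← intervalIntegral.integral_add]
    · congr 1; ext θ; ring
    · exact ((continuous_const.sub continuous_sin).mul (bs_rpow_cont hm1 _)).intervalIntegrable _ _
    · exact (continuous_sin.mul (bs_rpow_cont hm1 _)).intervalIntegrable _ _
  rw [e, sin_part hm.1 hm.2, rpow_one]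
  have hb0 : 0 < √(1 - m) := sqrt_pos.2 (by linarith [hm.2])
  have hb2 : √(1 - m) ^ 2 = 1 - m := sq_sqrt (by linarith [hm.2])
  have em : m = 1 - √(1 - m) ^ 2 := by rw [hb2]; ring
  generalize log (1 + √(1 - m)) = A
  generalize JJ (fun θ => 1 - sin θ) (1 - m) = B
  generalize log m = L
  generalize √(1 - m) = b at *
  rw [em]
  field_simp
  ring

/-- m * kk(1-m) → 0 -/
lemma mkk : Tendsto (fun m => m * kk (1 - m)) (𝓝[>] 0) (𝓝 0) := by
  have hm : Tendsto (fun m : ℝ => log m * m ^ (1:ℝ)) (𝓝[>] 0) (𝓝 0) :=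
    tendsto_log_mul_rpow_nhdsGT_zero one_pos
  have hid : Tendsto (fun m : ℝ => m) (𝓝[>] 0) (𝓝 0) :=
    (continuous_id.tendsto (0:ℝ)).mono_left nhdsWithin_le_nhds
  have := (hid.mul kk_log).sub (hm.div_const 2)
  simp only [zero_mul, zero_div, sub_zero, rpow_one] at this
  refine this.congr fun m => ?_
  ring

lemma kk1_deriv {m : ℝ} (hm : 0 < m) :
    HasDerivAt (fun m => kk (1 - m)) (-(cc (1 - m) / (2 * m))) m := by
  have h := (kk_deriv (m := 1 - m) (by linarith)).comp_const_sub 1 m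
  refine h.congr_deriv ?_
  ring_nf

lemma mcc1_deriv {m : ℝ} (hm : 0 < m) :
    HasDerivAt (fun m => (1 - m) * cc (1 - m)) (-(kk (1 - m) / 2)) m :=
  (mcc_deriv (m := 1 - m) (by linarith)).comp_const_sub 1 m

lemma kk_tendsto : Tendsto kk (𝓝[>] 0) (𝓝 (π / 2)) := by
  have := (kk_deriv (m := 0) (by norm_num)).continuousAt.tendsto
  rw [kk_zero] at this
  exact this.mono_left nhdsWithin_le_nhds

lemma legendre {m : ℝ} (h0 : 0 < m) (h1 : m < 1) :
    m * cc m * kk (1 - m) + (1 - m) * cc (1 - m) * kk m = π / 2 := by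
  set L : ℝ → ℝ := fun m => m * cc m * kk (1 - m) + (1 - m) * cc (1 - m) * kk m with hL
  have hd : ∀ x ∈ Ioo (0:ℝ) 1, HasDerivAt L 0 x := by
    intro x hx
    have := ((mcc_deriv hx.2).mul (kk1_deriv hx.1)).add ((mcc1_deriv hx.1).mul (kk_deriv hx.2))
    refine this.congr_deriv ?_
    have h2 := hx.1.ne'
    have h3 : 1 - x ≠ 0 := by linarith [hx.2]
    field_simp
    ring
  have hconst : ∀ x ∈ Ioo (0:ℝ) 1, L x = L m := fun x hx =>
    isOpen_Ioo.is_const_of_deriv_eq_zero isPreconnected_Ioo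
      (fun y hy => (hd y hy).differentiableAt.differentiableWithinAt)
      (fun y hy => (hd y hy).deriv) hx ⟨h0, h1⟩
  have hlim : Tendsto L (𝓝[>] 0) (𝓝 (π / 2)) := by
    have hid : Tendsto (fun m : ℝ => 1 - m) (𝓝[>] 0) (𝓝 (1 - 0)) :=
      ((continuous_const.sub continuous_id).tendsto (0:ℝ)).mono_left nhdsWithin_le_nhds
    have t1 : Tendsto (fun m => m * cc m * kk (1 - m)) (𝓝[>] 0) (𝓝 0) := by
      refine squeeze_zero' ?_ ?_ mkk
      · filter_upwards [Ioo_mem_nhdsGT (zero_lt_one' ℝ)] with m hm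
        have := cc_nonneg hm.2
        have := kk_pos (m := 1 - m) (by linarith [hm.1])
        have := hm.1
        positivity
      · filter_upwards [Ioo_mem_nhdsGT (zero_lt_one' ℝ)] with m hm
        have a1 := cc_le hm.2
        have a2 := kk_pos (m := 1 - m) (by linarith [hm.1])
        have a3 := hm.1
        have : 0 ≤ m * kk (1 - m) * (1 - cc m) := mul_nonneg (by positivity) (by linarith)
        nlinarith
    have := t1.add ((hid.mul cc_tendsto).mul kk_tendsto)
    simpa using this
  have hlim2 : Tendsto L (𝓝[>] 0) (𝓝 (L m)) := by
    refine tendsto_const_nhds.congr' ?_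
    filter_upwards [Ioo_mem_nhdsGT (zero_lt_one' ℝ)] with x hx
    exact (hconst x hx).symm
  exact tendsto_nhds_unique hlim2 hlim

noncomputable def FF (m : ℝ) : ℝ :=
  2 / π * kk m * kk (1 - m) + log m / 2 - π / 2 * kk m / kk (1 - m)

lemma FF_deriv {m : ℝ} (h0 : 0 < m) (h1 : m < 1) :
    ∃ d < 0, HasDerivAt FF d m := by
  have hk1 := kk_pos (m := 1 - m) (by linarith)
  have hd := ((((kk_deriv h1).const_mul (2 / π)).mul (kk1_deriv h0)).add
    ((hasDerivAt_log h0.ne').div_const 2)).sub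
    (((kk_deriv h1).const_mul (π / 2)).div (kk1_deriv h0) hk1.ne')
  refine ⟨_, ?_, hd⟩
  have hc := cc_le h1
  have hL := legendre h0 h1
  set a := √(√m) with ha
  have ha0 : 0 < a := sqrt_pos.2 (sqrt_pos.2 h0)
  have ha4 : a ^ 4 = m := by
    rw [show 4 = 2 * 2 by norm_num, pow_mul, sq_sqrt (sqrt_nonneg _), sq_sqrt h0.le]
  have hk := kk_le ha0
  rw [ha4] at hk
  have ha1 : a < 1 := by
    by_contra h
    push Not at h
    have : 1 ≤ a ^ 4 := one_le_pow₀ h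
    linarith
  set k := kk m
  set k1 := kk (1 - m)
  set c := cc m
  set c1 := cc (1 - m)
  have hm1 : 0 < 1 - m := by linarith
  have hp := pi_pos
  -- main inequality with M = π / (2 k1)
  have hM : ∃ M, M = π / (2 * k1) := ⟨_, rfl⟩
  obtain ⟨M, hM⟩ := hM
  have hM0 : 0 < M := by rw [hM]; positivity
  have hMa : a ≤ M := by rw [hM, le_div_iff₀ (by positivity)]; linarith
  have hkM : k1 = π / (2 * M) := by rw [hM]; field_simp
  have main : 2 * m * c < M * (m + M ^ 2) := by
    have i1 : 2 * m * c ≤ 2 * a ^ 4 := by rw [ha4]; nlinarith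
    have i2 : a ^ 2 ≤ M ^ 2 := by gcongr
    have i3 : a ^ 2 < M := by nlinarith
    have i4 : 0 < M * (M - a ^ 2) ^ 2 := by
      have : 0 < M - a ^ 2 := by linarith
      positivity
    have i5 : a ^ 2 * a ^ 2 ≤ a ^ 2 * M ^ 2 := by gcongr
    rw [← ha4]
    nlinarith
  have hk' : k * c1 = (π / 2 - m * c * k1) / (1 - m) := by
    rw [eq_div_iff hm1.ne']; linarith
  have : 2 / π * (c / (2 * (1 - m))) * k1 + 2 / π * k * -(c1 / (2 * m)) + m⁻¹ / 2 -
      (π / 2 * (c / (2 * (1 - m))) * k1 - π / 2 * k * -(c1 / (2 * m))) / k1 ^ 2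
      = (2 * m * c - M * (m + M ^ 2)) / (M * (2 * m * (1 - m))) := by
    trans 2 / π * (c / (2 * (1 - m))) * k1 - 2 / π * ((k * c1) / (2 * m)) + m⁻¹ / 2 -
      (π / 2 * (c / (2 * (1 - m))) * k1 + π / 2 * ((k * c1) / (2 * m))) / k1 ^ 2
    · ring
    · rw [hk', hkM]
      field_simp
      ring
  have this2 := this
  refine lt_of_eq_of_lt this ?_
  apply div_neg_of_neg_of_pos (by linarith) (by positivity)

lemma FF_zero : Tendsto FF (𝓝[>] 0) (𝓝 (log 4)) := by
  have hsl : Tendsto (fun m => (kk m - π / 2) / m) (𝓝[>] 0) (𝓝 (cc 0 / (2 * (1 - 0)))) := by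
    have := (kk_deriv (m := 0) (by norm_num)).tendsto_slope
    have := this.mono_left (nhdsWithin_mono (0:ℝ) (s := Ioi 0) (fun x (hx : 0 < x) => hx.ne'))
    refine this.congr fun m => ?_
    rw [slope_def_field, kk_zero, sub_zero]
  have hinf : Tendsto (fun m => kk (1 - m)) (𝓝[>] 0) atTop := by
    have h1 : Tendsto (fun m : ℝ => -(log m / 2)) (𝓝[>] 0) atTop :=
      tendsto_neg_atBot_atTop.comp (tendsto_log_nhdsGT_zero.atBot_div_const two_pos)
    have := kk_log.add_atTop h1
    refine this.congr fun m => ?_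
    ring
  have t3 : Tendsto (fun m => π / 2 * kk m / kk (1 - m)) (𝓝[>] 0) (𝓝 0) :=
    (kk_tendsto.const_mul (π / 2)).div_atTop hinf
  have := (kk_log.add ((hsl.mul mkk).const_mul (2 / π))).sub t3
  simp only [mul_zero, add_zero, sub_zero] at this
  refine this.congr' ?_
  filter_upwards [self_mem_nhdsWithin] with m hm
  have hm : m ≠ 0 := (show (0:ℝ) < m from hm).ne'
  unfold FF
  have := pi_pos
  generalize π / 2 * kk m / kk (1 - m) = Z
  field_simp
  ring

lemma FF_one : Tendsto (fun n => FF (1 - n)) (𝓝[>] 0) (𝓝 0) := by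
  have hd : ∃ d, HasDerivAt (fun n => 2 / π * kk n - π / 2 / kk n) d 0 := by
    have h := kk_deriv (m := 0) (by norm_num)
    exact ⟨_, (h.const_mul (2 / π)).sub
      ((hasDerivAt_const 0 (π / 2)).div h (kk_pos (by norm_num)).ne')⟩
  obtain ⟨d, hd⟩ := hd
  have hsl : Tendsto (fun n => (2 / π * kk n - π / 2 / kk n) / n) (𝓝[>] 0) (𝓝 d) := by
    have := hd.tendsto_slope
    have := this.mono_left (nhdsWithin_mono (0:ℝ) (s := Ioi 0) (fun x (hx : 0 < x) => hx.ne'))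
    refine this.congr fun m => ?_
    have hp := pi_pos.ne'
    have e : 2 / π * (π / 2) - π / 2 / (π / 2) = 0 := by field_simp; norm_num
    rw [slope_def_field, kk_zero, e, sub_zero, sub_zero]
  have hl : Tendsto (fun n : ℝ => log (1 - n) / 2) (𝓝[>] 0) (𝓝 0) := by
    have : ContinuousAt (fun n : ℝ => log (1 - n) / 2) 0 := by
      apply ContinuousAt.div_const
      apply ContinuousAt.log (by fun_prop)
      simp
    have := this.tendsto.mono_left (nhdsWithin_le_nhds (s := Ioi 0))
    simpa using this
  have := (hsl.mul mkk).add hl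
  simp only [mul_zero, add_zero] at this
  refine this.congr' ?_
  filter_upwards [self_mem_nhdsWithin] with m hm
  have hm : m ≠ 0 := (show (0:ℝ) < m from hm).ne'
  unfold FF
  rw [sub_sub_cancel]
  have : (2 / π * kk m - π / 2 / kk m) / m * (m * kk (1 - m)) =
    (2 / π * kk m - π / 2 / kk m) * kk (1 - m) := by field_simp
  rw [this]; ring

lemma ellK_eq (r : ℝ) : ellK r = kk (r ^ 2) := by
  simp [ellK, kk, JJ, bs]

theorem stmt_2 (f : ℝ → ℝ)
    (hf : f = fun r : ℝ => 2 / Real.pi * ellK r * ellK (Real.sqrt (1 - r ^ 2)) +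
      Real.log r - mu (Real.sqrt (1 - r ^ 2))) :
    StrictAntiOn f (Set.Ioo 0 1) ∧
    Filter.Tendsto f (nhdsWithin 0 (Set.Ioi 0)) (nhds (Real.log 4)) ∧
    Filter.Tendsto f (nhdsWithin 1 (Set.Iio 1)) (nhds 0) ∧
    f '' Set.Ioo 0 1 = Set.Ioo 0 (Real.log 4) := by
  have hfF : ∀ r ∈ Ioo (0:ℝ) 1, f r = FF (r ^ 2) := by
    intro r hr
    have h1 : 0 ≤ 1 - r ^ 2 := by nlinarith [hr.1, hr.2]
    rw [hf]
    simp only [mu, ellK_eq]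
    rw [sq_sqrt h1, sub_sub_cancel, sq_sqrt (sq_nonneg r)]
    unfold FF
    rw [log_pow]; push_cast; ring
  have hsq : ∀ r ∈ Ioo (0:ℝ) 1, r ^ 2 ∈ Ioo (0:ℝ) 1 := fun r hr =>
    ⟨by have := hr.1; positivity, by nlinarith [hr.1, hr.2]⟩
  have hFc : ContinuousOn FF (Ioo 0 1) := fun m hm => by
    obtain ⟨d, _, h⟩ := FF_deriv hm.1 hm.2
    exact h.continuousAt.continuousWithinAt
  have hFanti : StrictAntiOn FF (Ioo 0 1) := by
    apply strictAntiOn_of_deriv_neg (convex_Ioo _ _) hFc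
    intro m hm
    rw [interior_Ioo] at hm
    obtain ⟨d, hd, h⟩ := FF_deriv hm.1 hm.2
    rw [h.deriv]; exact hd
  have hanti : StrictAntiOn f (Ioo 0 1) := by
    intro x hx y hy hxy
    rw [hfF x hx, hfF y hy]
    exact hFanti (hsq x hx) (hsq y hy) (by have := hx.1; gcongr)
  have hcont : ContinuousOn f (Ioo 0 1) := by
    refine ContinuousOn.congr ?_ hfF
    exact hFc.comp (by fun_prop) hsq
  have t0 : Tendsto f (𝓝[>] 0) (𝓝 (log 4)) := by
    have h2 : Tendsto (fun r : ℝ => r ^ 2) (𝓝[>] 0) (𝓝[>] 0) := by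
      apply tendsto_nhdsWithin_of_tendsto_nhds_of_eventually_within
      · have := ((continuous_pow 2).tendsto (0:ℝ)).mono_left (nhdsWithin_le_nhds (s := Ioi 0))
        simpa using this
      · filter_upwards [self_mem_nhdsWithin] with r hr
        have : (0:ℝ) < r := hr
        exact pow_pos this 2
    refine (FF_zero.comp h2).congr' ?_
    filter_upwards [Ioo_mem_nhdsGT (zero_lt_one' ℝ)] with r hr
    exact (hfF r hr).symm
  have t1 : Tendsto f (𝓝[<] 1) (𝓝 0) := by
    have h2 : Tendsto (fun r : ℝ => 1 - r ^ 2) (𝓝[<] 1) (𝓝[>] 0) := by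
      apply tendsto_nhdsWithin_of_tendsto_nhds_of_eventually_within
      · have := ((continuous_const.sub (continuous_pow 2)).tendsto (1:ℝ)).mono_left
          (nhdsWithin_le_nhds (s := Iio 1)) (f := fun r : ℝ => 1 - r ^ 2)
        simpa using this
      · filter_upwards [Ioo_mem_nhdsLT (zero_lt_one' ℝ)] with r hr
        have := (hsq r hr).2
        exact sub_pos.2 this
    refine (FF_one.comp h2).congr' ?_
    filter_upwards [Ioo_mem_nhdsLT (zero_lt_one' ℝ)] with r hr
    rw [hfF r hr]; simp
  refine ⟨hanti, t0, t1, ?_⟩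
  apply Subset.antisymm
  · rintro _ ⟨x, hx, rfl⟩
    constructor
    · obtain ⟨y, hy1, hy2⟩ := exists_between hx.2
      have hy : y ∈ Ioo (0:ℝ) 1 := ⟨hx.1.trans hy1, hy2⟩
      refine lt_of_le_of_lt ?_ (hanti hx hy hy1)
      refine le_of_tendsto t1 ?_
      filter_upwards [Ioo_mem_nhdsLT hy2] with z hz
      exact (hanti hy ⟨hy.1.trans hz.1, hz.2⟩ hz.1).le
    · obtain ⟨y, hy1, hy2⟩ := exists_between hx.1
      have hy : y ∈ Ioo (0:ℝ) 1 := ⟨hy1, hy2.trans hx.2⟩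
      refine lt_of_lt_of_le (hanti hy hx hy2) ?_
      refine ge_of_tendsto t0 ?_
      filter_upwards [Ioo_mem_nhdsGT hy1] with z hz
      exact (hanti ⟨hz.1, hz.2.trans hy.2⟩ hy hz.2).le
  · rintro v ⟨hv0, hv1⟩
    obtain ⟨x, hxv, hx⟩ := ((t0.eventually (lt_mem_nhds hv1)).and
      (Ioo_mem_nhdsGT (zero_lt_one' ℝ))).exists
    obtain ⟨y, hyv, hy⟩ := ((t1.eventually (gt_mem_nhds hv0)).and
      (Ioo_mem_nhdsLT (zero_lt_one' ℝ))).exists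
    exact (isPreconnected_Ioo.intermediate_value hy hx hcont) ⟨hyv.le, hxv.le⟩
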